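/- arXiv:2211.05460 — 3 statements merged into one kernel-verified Lean document; each statement's English description precedes it below -/
import Mathlib

section
/- For every integer k ≥ 2, the following identity of formal power series in x with coefficients in ℤ[p,q] holds: (1 − (pq + pq²)·x + (p²q³ − p³q³)·x² + p^{k+2} q^{2k+1}·x^{k+1}) · Σ_{n≥1} ( Σ_{w ∈ F_{n,k}} p^{sper(w)} q^{area(w)} ) xⁿ = p²·( (q + pq²)·x − (pq³ − p²q³)·x² − p^{k} q^{2k}·x^{k} − p^{k+1} q^{2k+1}·x^{k+1} ). -/
open Finset

/-- Number of `1`s in a binary word. -/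
def wOnes (w : List Bool) : ℕ := w.count true

/-- Number of maximal runs (blocks) of consecutive `1`s in a binary word. -/
def wRuns (w : List Bool) : ℕ := w.count true - (w.zip w.tail).count (true, true)

/-- The set `F_{n,k}` of binary words of length `n` avoiding `k` consecutive `1`s. -/
def kbonWords (n k : ℕ) : Finset (Fin n → Bool) :=
  Finset.univ.filter (fun w => ¬ (List.replicate k true <:+: List.ofFn w))

/-- The polynomial ring `ℤ[p,q]`. -/
abbrev Rpq : Type := MvPolynomial (Fin 2) ℤ

noncomputable def pvar : Rpq := MvPolynomial.X 0
noncomputable def qvar : Rpq := MvPolynomial.X 1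

/-- Area of the `k`-bonacci polyomino of a word of length `n`. -/
def wArea (n : ℕ) (w : List Bool) : ℕ := n + wOnes w

/-- Semiperimeter of the `k`-bonacci polyomino of a word of length `n`. -/
def wSper (n : ℕ) (w : List Bool) : ℕ := n + 1 + wRuns w

/-!
Read a word from left to right and remember the length `j < k` of the run of `1`s just read. If
`S j` is the generating function of the possible continuations, then, according to whether the
continuation is empty, begins with `0` or begins with `1`,
`S j = e j * (1 + a * x * S 0) + b * x * S (j + 1)`, where `a` and `b` are the weights of `0` and
`1`, and `e j` is the weight of the run: `1` if `j = 0`, and otherwise the weight `t` of a block.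
Since `S k = 0`, unrolling gives
`S 0 = (∑ j < k, (b * x) ^ j * e j) * (1 + a * x * S 0)`, and multiplication by `1 - b * x` turns
the sum into `1 - b * x + t * (b * x - (b * x) ^ k)`. The theorem is the case
`a = p * q`, `b = p * q ^ 2`, `t = p`.
-/

section Words

/-- This makes the truncated subtraction in `wRuns` exact. -/
theorem count_zip_tail_le_count (w : List Bool) :
    (w.zip w.tail).count (true, true) ≤ w.count true :=
  calc (w.zip w.tail).count (true, true)
    _ ≤ ((w.zip w.tail).map Prod.snd).count true :=
      List.count_le_count_map (f := Prod.snd) (x := (true, true))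
    _ = w.tail.count true := by rw [List.map_snd_zip (by simp)]
    _ ≤ w.count true := (List.tail_sublist w).count_le true

theorem count_zip_false_cons (w : List Bool) :
    ((false :: w).zip w).count (true, true) = (w.zip w.tail).count (true, true) := by
  cases w <;> simp

theorem wRuns_nil : wRuns [] = 0 := rfl

theorem wRuns_false_cons (w : List Bool) : wRuns (false :: w) = wRuns w := by
  simp [wRuns, count_zip_false_cons]

theorem wRuns_true_false_cons (w : List Bool) : wRuns (true :: false :: w) = wRuns w + 1 := by
  simp [wRuns, count_zip_false_cons, Nat.sub_add_comm (count_zip_tail_le_count w)]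

theorem wRuns_true_true_cons (w : List Bool) : wRuns (true :: true :: w) = wRuns (true :: w) := by
  simp [wRuns]

theorem wRuns_replicate_succ_append (j : ℕ) (w : List Bool) :
    wRuns (List.replicate (j + 1) true ++ w) = wRuns (true :: w) := by
  induction j with
  | zero => rfl
  | succ j ih => rwa [List.replicate_succ, List.replicate_succ, List.cons_append,
      List.cons_append, wRuns_true_true_cons, ← List.cons_append, ← List.replicate_succ]

theorem wRuns_replicate_succ (j : ℕ) : wRuns (List.replicate (j + 1) true) = 1 := by
  rw [← List.append_nil (List.replicate (j + 1) true), wRuns_replicate_succ_append]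
  rfl

theorem wRuns_replicate_append_false_cons (j : ℕ) (w : List Bool) :
    wRuns (List.replicate j true ++ false :: w) = wRuns (List.replicate j true) + wRuns w := by
  cases j with
  | zero => simp [wRuns_nil, wRuns_false_cons]
  | succ j =>
    rw [wRuns_replicate_succ_append, wRuns_true_false_cons, wRuns_replicate_succ, add_comm]

theorem infix_append_cons_iff_of_notMem {α : Type*} {l xs ys : List α} {a : α} (ha : a ∉ l) :
    l <:+: xs ++ a :: ys ↔ l <:+: xs ∨ l <:+: ys := by
  have eq_nil_of_prefix {m : List α} (hm : m <+: a :: ys) (hml : m ⊆ l) : m = [] := by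
    rcases List.prefix_cons_iff.1 hm with rfl | ⟨_, rfl, -⟩
    · rfl
    · exact absurd (hml List.mem_cons_self) ha
  constructor
  · rw [List.infix_append_iff, List.infix_cons_iff]
    rintro (hxs | (hpre | hys) | ⟨l₁, l₂, rfl, hsuf, hpre⟩)
    · exact .inl hxs
    · rw [eq_nil_of_prefix hpre (List.Subset.refl l)]
      exact .inl List.nil_infix
    · exact .inr hys
    · rw [eq_nil_of_prefix hpre (List.subset_append_right l₁ l₂), List.append_nil]
      exact .inl hsuf.isInfix
  · rintro (hxs | hys)
    · exact hxs.trans (List.prefix_append xs _).isInfix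
    · exact hys.trans ((List.suffix_cons a ys).trans (List.suffix_append xs _)).isInfix

theorem not_replicate_infix_replicate {α : Type*} {j k : ℕ} (h : j < k) (a : α) :
    ¬ List.replicate k a <:+: List.replicate j a := fun hinf =>
  h.not_ge (by simpa using hinf.length_le)

theorem replicate_true_infix_append_false_cons {j k : ℕ} (h : j < k) (w : List Bool) :
    List.replicate k true <:+: List.replicate j true ++ false :: w ↔
      List.replicate k true <:+: w := by
  rw [infix_append_cons_iff_of_notMem (by simp),
    or_iff_right (not_replicate_infix_replicate h true)]

end Words

open PowerSeries

section WordSeries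

variable {R α : Type*} [Fintype α]

/-- The generating function `∑ f(w) x ^ |w|` of a weight `f` on the words over `α`. -/
def wordSeries [Semiring R] (f : List α → R) : R⟦X⟧ :=
  PowerSeries.mk fun n => ∑ w : Fin n → α, f (List.ofFn w)

theorem coeff_wordSeries [Semiring R] (f : List α → R) (n : ℕ) :
    coeff n (wordSeries f) = ∑ w : Fin n → α, f (List.ofFn w) :=
  coeff_mk n _

theorem wordSeries_const_mul [Semiring R] (c : R) (f : List α → R) :
    wordSeries (fun w => c * f w) = C c * wordSeries f := by
  ext n
  simp only [coeff_wordSeries, coeff_C_mul, mul_sum]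

theorem wordSeries_eq_nil_add_cons [Semiring R] (f : List α → R) :
    wordSeries f = C (f []) + X * ∑ a, wordSeries fun w => f (a :: w) := by
  ext n
  cases n with
  | zero => simp [coeff_wordSeries]
  | succ n =>
    have sum_cons : ∑ w : Fin (n + 1) → α, f (List.ofFn w)
        = ∑ a, ∑ w : Fin n → α, f (a :: List.ofFn w) := by
      rw [← (Fin.consEquiv fun _ => α).sum_comp, Fintype.sum_prod_type]
      simp [Fin.consEquiv, List.ofFn_succ]
    rw [coeff_wordSeries, sum_cons]
    simp [coeff_wordSeries, coeff_succ_X_mul]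

end WordSeries

section KbonWeight

variable {R : Type*} [CommSemiring R] (a b t : R)

/-- The weight of a word `w` as a continuation of a run of `j` ones: each `0` of `w` contributes
`a`, each `1` of `w` contributes `b`, and each block of `1 ^ j w` contributes `t`. The weight is `0`
if `1 ^ j w` contains `k` consecutive ones. -/
def kbonWeight (k j : ℕ) (w : List Bool) : R :=
  if List.replicate k true <:+: List.replicate j true ++ w then 0
  else a ^ w.count false * b ^ w.count true * t ^ wRuns (List.replicate j true ++ w)

theorem kbonWeight_self (k : ℕ) (w : List Bool) : kbonWeight a b t k k w = 0 :=
  if_pos (List.prefix_append _ _).isInfix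

variable {j k : ℕ}

theorem kbonWeight_nil (h : j < k) :
    kbonWeight a b t k j [] = t ^ wRuns (List.replicate j true) := by
  simp [kbonWeight, not_replicate_infix_replicate h]

theorem kbonWeight_false_cons (h : j < k) (w : List Bool) :
    kbonWeight a b t k j (false :: w)
      = t ^ wRuns (List.replicate j true) * a * kbonWeight a b t k 0 w := by
  simp only [kbonWeight, replicate_true_infix_append_false_cons h,
    wRuns_replicate_append_false_cons, List.replicate_zero, List.nil_append]
  split_ifs
  · rw [mul_zero]
  · simp only [List.count_cons_self, List.count_cons_of_ne, ne_eq, Bool.false_eq_true,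
      not_false_eq_true]
    ring

theorem kbonWeight_true_cons (w : List Bool) :
    kbonWeight a b t k j (true :: w) = b * kbonWeight a b t k (j + 1) w := by
  have absorb : List.replicate j true ++ true :: w = List.replicate (j + 1) true ++ w := by
    rw [List.replicate_succ', List.append_assoc, List.singleton_append]
  simp only [kbonWeight, absorb]
  split_ifs
  · rw [mul_zero]
  · simp only [List.count_cons_self, List.count_cons_of_ne, ne_eq, Bool.true_eq_false,
      not_false_eq_true]
    ring

end KbonWeight

section KbonSeries

variable {R : Type*}

/-- The generating function of the continuations of a run of `j` ones avoiding `k` consecutive ones,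
weighted by `kbonWeight`. For `j = 0` it counts the `k`-bonacci words by zeros, ones and blocks. -/
def kbonSeries [CommSemiring R] (a b t : R) (k j : ℕ) : R⟦X⟧ := wordSeries (kbonWeight a b t k j)

theorem kbonSeries_self [CommSemiring R] (a b t : R) (k : ℕ) : kbonSeries a b t k k = 0 := by
  ext n
  simp [kbonSeries, coeff_wordSeries, kbonWeight_self]

theorem kbonSeries_eq_add_succ [CommSemiring R] (a b t : R) {j k : ℕ} (h : j < k) :
    kbonSeries a b t k j
      = C t ^ wRuns (List.replicate j true) * (1 + C a * X * kbonSeries a b t k 0)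
        + C b * X * kbonSeries a b t k (j + 1) := by
  simp only [kbonSeries]
  rw [wordSeries_eq_nil_add_cons, Fintype.sum_bool, kbonWeight_nil a b t h]
  simp only [kbonWeight_false_cons a b t h, kbonWeight_true_cons, wordSeries_const_mul,
    map_mul, map_pow]
  ring

theorem kbonSeries_zero_eq_sum_add [CommSemiring R] (a b t : R) {i k : ℕ} (h : i ≤ k) :
    kbonSeries a b t k 0
      = (∑ j ∈ range i, (C b * X) ^ j * C t ^ wRuns (List.replicate j true))
          * (1 + C a * X * kbonSeries a b t k 0)
        + (C b * X) ^ i * kbonSeries a b t k i := by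
  induction i with
  | zero => simp
  | succ i ih =>
    refine (ih (Nat.le_of_succ_le h)).trans ?_
    rw [kbonSeries_eq_add_succ a b t h, sum_range_succ]
    ring

theorem sum_pow_mul_pow_wRuns_mul_one_sub [CommRing R] (y t : R) {k : ℕ} (hk : 1 ≤ k) :
    (∑ j ∈ range k, y ^ j * t ^ wRuns (List.replicate j true)) * (1 - y)
      = 1 - y + t * (y - y ^ k) := by
  obtain ⟨m, rfl⟩ := Nat.exists_eq_add_of_le' hk
  have sum_eq : ∑ j ∈ range (m + 1), y ^ j * t ^ wRuns (List.replicate j true)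
      = t * y * ∑ j ∈ range m, y ^ j + 1 := by
    rw [sum_range_succ', mul_sum]
    simp only [wRuns_replicate_succ, List.replicate_zero, wRuns_nil, pow_zero, pow_one, mul_one]
    exact congrArg (· + 1) (sum_congr rfl fun j _ => by ring)
  rw [sum_eq]
  linear_combination t * y * geom_sum_mul_neg y m

theorem kbonSeries_zero_mul_one_sub [CommRing R] (a b t : R) {k : ℕ} (hk : 1 ≤ k) :
    kbonSeries a b t k 0 * (1 - C b * X)
      = (1 - C b * X + C t * (C b * X - (C b * X) ^ k))
          * (1 + C a * X * kbonSeries a b t k 0) := by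
  have unrolled := kbonSeries_zero_eq_sum_add a b t le_rfl (k := k)
  rw [kbonSeries_self, mul_zero, add_zero] at unrolled
  rw [← sum_pow_mul_pow_wRuns_mul_one_sub (C b * X) (C t) hk]
  linear_combination (1 - C b * X) * unrolled

end KbonSeries

section Polyomino

variable {R : Type*}

theorem pow_wSper_mul_pow_wArea [CommSemiring R] (p q : R) (w : List Bool) :
    p ^ wSper w.length w * q ^ wArea w.length w
      = p * ((p * q) ^ w.count false * (p * q ^ 2) ^ w.count true * p ^ wRuns w) := by
  rw [wSper, wArea, wOnes, ← List.count_false_add_count_true w]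
  ring

theorem mk_sum_kbonWords_eq_kbonSeries [CommRing R] (p q : R) {k : ℕ} (hk : 1 ≤ k) :
    PowerSeries.mk (fun n => if n = 0 then 0 else
        ∑ w ∈ kbonWords n k, p ^ wSper n (List.ofFn w) * q ^ wArea n (List.ofFn w))
      = C p * (kbonSeries (p * q) (p * q ^ 2) p k 0 - 1) := by
  ext n
  rw [coeff_mk, coeff_C_mul, map_sub, kbonSeries, coeff_wordSeries, coeff_one]
  split_ifs with hn
  · subst hn
    simp [kbonWeight_nil _ _ _ hk, wRuns_nil]
  · rw [sub_zero, mul_sum, kbonWords, sum_filter]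
    refine sum_congr rfl fun w _ => ?_
    have weight := pow_wSper_mul_pow_wArea p q (List.ofFn w)
    rw [List.length_ofFn] at weight
    simp only [kbonWeight, List.replicate_zero, List.nil_append, weight, mul_ite, mul_zero,
      ite_not]

end Polyomino

theorem kbonacci_polyomino_gf_general {R : Type*} [CommRing R] (p q : R) {k : ℕ} (hk : 1 ≤ k) :
    (1 - C (p * q + p * q ^ 2) * X
        + C (p ^ 2 * q ^ 3 - p ^ 3 * q ^ 3) * X ^ 2
        + C (p ^ (k + 2) * q ^ (2 * k + 1)) * X ^ (k + 1))
      * PowerSeries.mk (fun n =>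
          if n = 0 then 0 else
            ∑ w ∈ kbonWords n k,
              p ^ wSper n (List.ofFn w) * q ^ wArea n (List.ofFn w))
    = C (p ^ 2)
        * (C (q + p * q ^ 2) * X
          - C (p * q ^ 3 - p ^ 2 * q ^ 3) * X ^ 2
          - C (p ^ k * q ^ (2 * k)) * X ^ k
          - C (p ^ (k + 1) * q ^ (2 * k + 1)) * X ^ (k + 1)) := by
  rw [mk_sum_kbonWords_eq_kbonSeries p q hk]
  have closed := kbonSeries_zero_mul_one_sub (p * q) (p * q ^ 2) p hk
  simp only [map_mul, map_add, map_sub, map_pow] at closed ⊢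
  linear_combination C p * closed

theorem kbonacci_polyomino_gf (k : ℕ) (hk : 2 ≤ k) :
    (1 - PowerSeries.C (R := Rpq) (pvar * qvar + pvar * qvar ^ 2) * PowerSeries.X
        + PowerSeries.C (R := Rpq) (pvar ^ 2 * qvar ^ 3 - pvar ^ 3 * qvar ^ 3) * PowerSeries.X ^ 2
        + PowerSeries.C (R := Rpq) (pvar ^ (k + 2) * qvar ^ (2 * k + 1)) * PowerSeries.X ^ (k + 1))
      * PowerSeries.mk (fun n =>
          if n = 0 then 0 else
            ∑ w ∈ kbonWords n k,
              pvar ^ wSper n (List.ofFn w) * qvar ^ wArea n (List.ofFn w))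
    = PowerSeries.C (R := Rpq) (pvar ^ 2)
        * (PowerSeries.C (R := Rpq) (qvar + pvar * qvar ^ 2) * PowerSeries.X
          - PowerSeries.C (R := Rpq) (pvar * qvar ^ 3 - pvar ^ 2 * qvar ^ 3) * PowerSeries.X ^ 2
          - PowerSeries.C (R := Rpq) (pvar ^ k * qvar ^ (2 * k)) * PowerSeries.X ^ k
          - PowerSeries.C (R := Rpq) (pvar ^ (k + 1) * qvar ^ (2 * k + 1)) * PowerSeries.X ^ (k + 1)) :=
  kbonacci_polyomino_gf_general pvar qvar (by lia)
end

section
/- For every integer k ≥ 2, the following identity of formal power series in x over ℤ holds: (1 − 2x + x^{k+1})² · Σ_{n≥1} ( Σ_{w ∈ F_{n,k}} area(w) ) xⁿ = 3x − 2k·x^{k} − 2(2 − k)·x^{k+1} + x^{2k+1}. In other words, the generating function for the total area of all k-bonacci polyominoes with n columns is A_k(x) = (3x − 2k x^k − 2(2−k) x^{k+1} + x^{2k+1})/(1 − 2x + x^{k+1})². -/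
/-!
Let `S j` be the generating function, with `x` marking length and `y` marking area, of the words
`w` such that `1ʲw` is `k`-bonacci. Removing the first letter of `w` gives
`S j = 1 + y x S 0 + y² x S (j + 1)` for `j < k`, and `S k = 0`. Solving this affine recursion,
`(1 - y² x) S 0 = (1 + y x S 0) (1 - (y² x)ᵏ)`.

Differentiation at `y = 1` is carried out by working over the dual numbers with `y = 1 + ε`: since
`yᵐ = 1 + m ε`, the two components of `S 0` are the generating functions of the number of words and
of their total area. The constant part of the equation determines the former, with denominator
`1 - 2x + xᵏ⁺¹`, and the `ε` part expresses the latter through it with the same denominator, which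
is why the denominator is squared in the end.
-/

open Finset

section Words

/-- The words that may follow a run of `j` ones in a `k`-bonacci word: those `w` of length `n` for
which `1ʲw` avoids `1ᵏ`. The index `j` is the state of the automaton recognising `k`-bonacci words,
`j = 0` being the initial state and `j = k` the rejecting one. -/
def kbonTails (n k j : ℕ) : Finset (Fin n → Bool) :=
  univ.filter fun w => ¬ List.replicate k true <:+: List.replicate j true ++ List.ofFn w

lemma kbonTails_zero_right (n k : ℕ) : kbonTails n k 0 = kbonWords n k := rfl

lemma kbonTails_self (n k : ℕ) : kbonTails n k k = ∅ :=
  filter_false_of_mem fun _ _ => not_not_intro (List.prefix_append _ _).isInfix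

lemma kbonTails_zero_left {k j : ℕ} (hj : j < k) : kbonTails 0 k j = univ := by
  refine filter_true_of_mem fun w _ h => hj.not_ge ?_
  simpa using h.length_le

lemma not_replicate_prefix_replicate_append_cons {α : Type*} {a b : α} (hab : a ≠ b) {j k : ℕ}
    (hj : j < k) (l : List α) : ¬ List.replicate k a <+: List.replicate j a ++ b :: l := by
  intro h
  have hj_letter := h.getElem (i := j) (by simpa using hj)
  simp [hab] at hj_letter

lemma replicate_infix_replicate_append_cons {α : Type*} {a b : α} (hab : a ≠ b) {j k : ℕ}
    (hj : j < k) (l : List α) :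
    List.replicate k a <:+: List.replicate j a ++ b :: l ↔ List.replicate k a <:+: l := by
  induction j with
  | zero =>
    exact List.infix_cons_iff.trans <|
      or_iff_right (not_replicate_prefix_replicate_append_cons hab hj l)
  | succ j ih =>
    have hprefix := not_replicate_prefix_replicate_append_cons hab hj l
    rw [List.replicate_succ, List.cons_append] at hprefix ⊢
    exact List.infix_cons_iff.trans <| (or_iff_right hprefix).trans <| ih (by omega)

lemma cons_false_mem_kbonTails {n k j : ℕ} (hj : j < k) (w : Fin n → Bool) :
    Fin.cons false w ∈ kbonTails (n + 1) k j ↔ w ∈ kbonTails n k 0 := by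
  simp [kbonTails, List.ofFn_succ, replicate_infix_replicate_append_cons, hj]

lemma cons_true_mem_kbonTails {n k j : ℕ} (w : Fin n → Bool) :
    Fin.cons true w ∈ kbonTails (n + 1) k j ↔ w ∈ kbonTails n k (j + 1) := by
  simp [kbonTails, List.ofFn_succ, List.replicate_succ']

lemma sum_eq_sum_sum_cons {α M : Type*} [Fintype α] [AddCommMonoid M] {n : ℕ}
    (f : (Fin (n + 1) → α) → M) : ∑ w, f w = ∑ a, ∑ w, f (Fin.cons a w) :=
  ((Fin.consEquiv fun _ => α).sum_comp f).symm.trans (Fintype.sum_prod_type _)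

lemma sum_kbonTails_succ {M : Type*} [AddCommMonoid M] {n k j : ℕ} (hj : j < k)
    (f : (Fin (n + 1) → Bool) → M) :
    ∑ w ∈ kbonTails (n + 1) k j, f w =
      ∑ w ∈ kbonTails n k 0, f (Fin.cons false w) +
        ∑ w ∈ kbonTails n k (j + 1), f (Fin.cons true w) := by
  rw [← Fintype.sum_ite_mem (kbonTails (n + 1) k j), sum_eq_sum_sum_cons, Fintype.sum_bool,
    add_comm]
  simp only [cons_false_mem_kbonTails hj, cons_true_mem_kbonTails, Fintype.sum_ite_mem]

lemma wArea_cons_false {n : ℕ} (w : Fin n → Bool) :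
    wArea (n + 1) (List.ofFn (Fin.cons false w : Fin (n + 1) → Bool)) =
      wArea n (List.ofFn w) + 1 := by
  rw [List.ofFn_cons]
  grind [wArea, wOnes]

lemma wArea_cons_true {n : ℕ} (w : Fin n → Bool) :
    wArea (n + 1) (List.ofFn (Fin.cons true w : Fin (n + 1) → Bool)) =
      wArea n (List.ofFn w) + 2 := by
  rw [List.ofFn_cons]
  grind [wArea, wOnes]

end Words

section AreaSeries

open PowerSeries

variable {R : Type*} [CommSemiring R]

/-- The generating function of `kbonTails · k j` in which `X` marks length and `y` marks area;
for `j = 0` it is the joint length-area enumerator of the `k`-bonacci polyominoes. -/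
noncomputable def areaSeries (y : R) (k j : ℕ) : R⟦X⟧ :=
  mk fun n => ∑ w ∈ kbonTails n k j, y ^ wArea n (List.ofFn w)

lemma areaSeries_self (y : R) (k : ℕ) : areaSeries y k k = 0 := by
  ext n
  simp [areaSeries, kbonTails_self]

lemma areaSeries_eq_add (y : R) {k j : ℕ} (hj : j < k) :
    areaSeries y k j =
      1 + C y * X * areaSeries y k 0 + C y ^ 2 * X * areaSeries y k (j + 1) := by
  rw [← map_pow, mul_assoc, mul_assoc]
  ext (_ | n)
  · simp [areaSeries, kbonTails_zero_left hj, wArea, wOnes]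
  · simp only [areaSeries, map_add, coeff_C_mul, coeff_succ_X_mul, coeff_mk, coeff_one,
      Nat.succ_ne_zero, if_false, zero_add, sum_kbonTails_succ hj, wArea_cons_false,
      wArea_cons_true, pow_add, pow_one, mul_sum, mul_comm]

lemma one_sub_mul_eq_of_affine_rec {R : Type*} [CommRing R] {b c : R} {k : ℕ} {S : ℕ → R}
    (hS : ∀ j < k, S j = c + b * S (j + 1)) (hk : S k = 0) : (1 - b) * S 0 = c * (1 - b ^ k) := by
  induction k generalizing S with
  | zero => simp [hk]
  | succ k ih =>
    have tail : (1 - b) * S 1 = c * (1 - b ^ k) := ih (fun j hj => hS (j + 1) (by omega)) hk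
    have head : S 0 = c + b * S 1 := hS 0 k.succ_pos
    linear_combination (1 - b) * head + b * tail

theorem areaSeries_mul {R : Type*} [CommRing R] (y : R) (k : ℕ) :
    (1 - C y * X - C y ^ 2 * X + C y ^ (2 * k + 1) * X ^ (k + 1)) * areaSeries y k 0 =
      1 - C y ^ (2 * k) * X ^ k := by
  have h := one_sub_mul_eq_of_affine_rec (S := areaSeries y k) (fun j hj => areaSeries_eq_add y hj)
    (areaSeries_self y k)
  rw [mul_pow, ← pow_mul] at h
  linear_combination h

end AreaSeries

section FirstOrder

open PowerSeries DualNumber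

variable {R : Type*} [CommSemiring R]

lemma map_add_eps_mul_map_inj {p q p' q' : R⟦X⟧} :
    map (algebraMap R R[ε]) p + C ε * map (algebraMap R R[ε]) q =
        map (algebraMap R R[ε]) p' + C ε * map (algebraMap R R[ε]) q' ↔
      p = p' ∧ q = q' := by
  simp [PowerSeries.ext_iff, TrivSqZeroExt.ext_iff, forall_and, TrivSqZeroExt.algebraMap_eq_inl]

lemma one_add_pow_of_mul_self_eq_zero {e : R} (he : e * e = 0) (m : ℕ) :
    (1 + e) ^ m = 1 + m * e := by
  induction m with
  | zero => simp
  | succ m ih =>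
    calc (1 + e) ^ (m + 1) = (1 + m * e) * (1 + e) := by rw [pow_succ, ih]
      _ = 1 + (m + 1) * e + m * (e * e) := by ring
      _ = 1 + (m + 1 : ℕ) * e := by rw [he, mul_zero, add_zero, Nat.cast_succ]

variable (R) in
/-- The generating function, over `R`, of the number of `k`-bonacci words by length. -/
noncomputable def countSeries (k : ℕ) : R⟦X⟧ := mk fun n => (#(kbonWords n k) : R)

variable (R) in
/-- The generating function, over `R`, of the total area of the `k`-bonacci polyominoes by number
of columns. The empty word has area `0`, so it does not matter that it is counted here. -/
noncomputable def totalAreaSeries (k : ℕ) : R⟦X⟧ :=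
  mk fun n => ∑ w ∈ kbonWords n k, (wArea n (List.ofFn w) : R)

lemma areaSeries_one_add_eps (k : ℕ) :
    areaSeries (1 + ε : R[ε]) k 0 =
      map (algebraMap R R[ε]) (countSeries R k) +
        C ε * map (algebraMap R R[ε]) (totalAreaSeries R k) := by
  ext1 n
  simp [areaSeries, countSeries, totalAreaSeries, kbonTails_zero_right, mul_sum, sum_add_distrib,
    one_add_pow_of_mul_self_eq_zero (eps_mul_eps (R := R)), mul_comm]

theorem countSeries_mul_and_totalAreaSeries_mul {R : Type*} [CommRing R] (k : ℕ) :
    (1 - 2 * X + X ^ (k + 1)) * countSeries R k = 1 - X ^ k ∧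
    (1 - 2 * X + X ^ (k + 1)) * totalAreaSeries R k =
      (3 * X - (2 * (k : R⟦X⟧) + 1) * X ^ (k + 1)) * countSeries R k -
        2 * (k : R⟦X⟧) * X ^ k := by
  have hε : C (ε : R[ε]) * C ε = 0 := by rw [← map_mul, eps_mul_eps, map_zero]
  have h := areaSeries_mul (1 + ε : R[ε]) k
  rw [areaSeries_one_add_eps] at h
  simp only [map_add, map_one, one_add_pow_of_mul_self_eq_zero hε] at h
  push_cast at h
  rw [← map_add_eps_mul_map_inj]
  simp only [map_mul, map_sub, map_add, map_one, map_pow, map_ofNat, map_natCast, map_X]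
  linear_combination h + (3 * X - (2 * (k : R[ε]⟦X⟧) + 1) * X ^ (k + 1)) *
    map (algebraMap R R[ε]) (totalAreaSeries R k) * hε

end FirstOrder

theorem total_area_gf (k : ℕ) (hk : 2 ≤ k) :
    (1 - 2 * PowerSeries.X + PowerSeries.X ^ (k + 1)) ^ 2
      * PowerSeries.mk (fun n =>
          if n = 0 then 0 else ∑ w ∈ kbonWords n k, (wArea n (List.ofFn w) : ℤ))
    = PowerSeries.C (R := ℤ) 3 * PowerSeries.X
        - PowerSeries.C (R := ℤ) (2 * k) * PowerSeries.X ^ k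
        - PowerSeries.C (R := ℤ) (2 * (2 - (k : ℤ))) * PowerSeries.X ^ (k + 1)
        + PowerSeries.X ^ (2 * k + 1) := by
  have series_eq : PowerSeries.mk (fun n =>
      if n = 0 then 0 else ∑ w ∈ kbonWords n k, (wArea n (List.ofFn w) : ℤ)) =
        totalAreaSeries ℤ k := by
    ext (_ | n) <;> simp [totalAreaSeries, wArea, wOnes]
  obtain ⟨hcount, harea⟩ := countSeries_mul_and_totalAreaSeries_mul (R := ℤ) k
  rw [series_eq]
  simp only [map_mul, map_sub, map_ofNat, map_natCast]
  linear_combination (1 - 2 * PowerSeries.X + PowerSeries.X ^ (k + 1)) * harea +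
    (3 * PowerSeries.X - (2 * (k : PowerSeries ℤ) + 1) * PowerSeries.X ^ (k + 1)) * hcount
end

section
/- Let t_n(p,q) = Σ_{w ∈ F_{n,2}} p^{sper(w)} q^{area(w)} ∈ ℤ[p,q]. Then for all n ≥ 3, t_n(p,q) = pq·t_{n−1}(p,q) + p³q³·t_{n−2}(p,q), with initial values t_1(p,q) = p²q + p³q² and t_2(p,q) = p³q² + 2p⁴q³. -/
open Finset

/-- `t_n(p,q) = Σ_{w ∈ F_{n,2}} p^{sper(w)} q^{area(w)}`. -/
noncomputable def tpoly (n : ℕ) : Rpq :=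
  ∑ w ∈ kbonWords n 2,
    pvar ^ (n + 1 + wRuns (List.ofFn w)) * qvar ^ (n + wOnes (List.ofFn w))

/-!
A word avoiding `11` has `b(w) = s(w)`, so the weight of its polyomino depends only on its length
and its number of `1`s. Splitting off the prefix up to the first `0`, a Fibonacci word of length
`n + 2` is either `0u` with `u` of length `n + 1`, or `10v` with `v` of length `n`; these prefixes
contribute the factors `pq` and `p³q³`.
-/

variable {n k : ℕ}

theorem mem_kbonWords {w : Fin n → Bool} :
    w ∈ kbonWords n k ↔ ¬ List.replicate k true <:+: List.ofFn w := by
  simp [kbonWords]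

theorem kbonWords_eq_univ_of_lt (h : n < k) : kbonWords n k = univ := by
  refine eq_univ_of_forall fun w => mem_kbonWords.2 fun hw => ?_
  have : k ≤ n := by simpa using hw.length_le
  omega

theorem cons_false_mem_kbonWords {w : Fin n → Bool} :
    (Fin.cons false w : Fin (n + 1) → Bool) ∈ kbonWords (n + 1) k ↔ w ∈ kbonWords n k := by
  cases k <;> simp [mem_kbonWords, List.infix_cons_iff, List.replicate_succ]

theorem cons_true_cons_false_mem_kbonWords (hk : 2 ≤ k) {w : Fin n → Bool} :
    (Fin.cons true (Fin.cons false w : Fin (n + 1) → Bool) : Fin (n + 2) → Bool) ∈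
      kbonWords (n + 2) k ↔ w ∈ kbonWords n k := by
  obtain ⟨j, rfl⟩ := Nat.exists_eq_add_of_le' hk
  simp [mem_kbonWords, List.infix_cons_iff, List.replicate_succ]

theorem cons_true_cons_true_notMem_kbonWords_two (w : Fin n → Bool) :
    (Fin.cons true (Fin.cons true w : Fin (n + 1) → Bool) : Fin (n + 2) → Bool) ∉
      kbonWords (n + 2) 2 := by
  simp [mem_kbonWords, List.infix_cons_iff, List.replicate_succ]

theorem sum_fin_succ_pi {α : Fin (n + 1) → Type*} [∀ i, Fintype (α i)] {M : Type*}
    [AddCommMonoid M] (f : (∀ i, α i) → M) :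
    ∑ w, f w = ∑ a : α 0, ∑ w : ∀ i : Fin n, α i.succ, f (Fin.cons a w) := by
  rw [← (Fin.consEquiv α).sum_comp, Fintype.sum_prod_type]
  rfl

theorem sum_kbonWords_two_add_two {M : Type*} [AddCommMonoid M] (f : (Fin (n + 2) → Bool) → M) :
    ∑ w ∈ kbonWords (n + 2) 2, f w =
      ∑ w ∈ kbonWords (n + 1) 2, f (Fin.cons false w) +
        ∑ w ∈ kbonWords n 2, f (Fin.cons true (Fin.cons false w : Fin (n + 1) → Bool)) := by
  rw [← Fintype.sum_ite_mem (kbonWords (n + 2) 2), sum_fin_succ_pi, Fintype.sum_bool,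
    sum_fin_succ_pi (n := n), Fintype.sum_bool]
  simp [cons_false_mem_kbonWords, cons_true_cons_false_mem_kbonWords,
    cons_true_cons_true_notMem_kbonWords_two, add_comm]

theorem mem_zip_tail_iff_pair_infix {α : Type*} {a b : α} {l : List α} :
    (a, b) ∈ l.zip l.tail ↔ [a, b] <:+: l := by
  induction l with
  | nil => simp
  | cons c l ih => cases l <;> simp_all [List.infix_cons_iff]

theorem wRuns_eq_wOnes_of_mem_kbonWords_two {w : Fin n → Bool} (hw : w ∈ kbonWords n 2) :
    wRuns (List.ofFn w) = wOnes (List.ofFn w) := by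
  have no_adjacent_ones : (true, true) ∉ (List.ofFn w).zip (List.ofFn w).tail :=
    mem_zip_tail_iff_pair_infix.not.2 (mem_kbonWords.1 hw)
  rw [wRuns, List.count_eq_zero_of_not_mem no_adjacent_ones, Nat.sub_zero, wOnes]

theorem tpoly_eq_sum_wOnes (n : ℕ) :
    tpoly n = ∑ w ∈ kbonWords n 2,
      pvar ^ (n + 1 + wOnes (List.ofFn w)) * qvar ^ (n + wOnes (List.ofFn w)) :=
  sum_congr rfl fun _ hw => by rw [wRuns_eq_wOnes_of_mem_kbonWords_two hw]

theorem wOnes_cons (a : Bool) (l : List Bool) : wOnes (a :: l) = wOnes l + a.toNat := by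
  cases a <;> simp [wOnes]

theorem tpoly_add_two (n : ℕ) :
    tpoly (n + 2) = pvar * qvar * tpoly (n + 1) + pvar ^ 3 * qvar ^ 3 * tpoly n := by
  simp only [tpoly_eq_sum_wOnes, sum_kbonWords_two_add_two, List.ofFn_cons, wOnes_cons,
    Bool.toNat_true, Bool.toNat_false, mul_sum]
  refine congrArg₂ (· + ·) (sum_congr rfl fun w _ => ?_) (sum_congr rfl fun w _ => ?_) <;> ring

theorem tpoly_zero : tpoly 0 = pvar := by
  simp [tpoly_eq_sum_wOnes, kbonWords_eq_univ_of_lt, wOnes]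

theorem tpoly_one : tpoly 1 = pvar ^ 2 * qvar + pvar ^ 3 * qvar ^ 2 := by
  simp [tpoly_eq_sum_wOnes, kbonWords_eq_univ_of_lt, sum_fin_succ_pi, wOnes, add_comm]

theorem fibonacci_polyomino_recurrence :
    (∀ n : ℕ, 3 ≤ n → tpoly n = pvar * qvar * tpoly (n - 1) + pvar ^ 3 * qvar ^ 3 * tpoly (n - 2))
    ∧ tpoly 1 = pvar ^ 2 * qvar + pvar ^ 3 * qvar ^ 2
    ∧ tpoly 2 = pvar ^ 3 * qvar ^ 2 + 2 * pvar ^ 4 * qvar ^ 3 := by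
  refine ⟨fun n hn => ?_, tpoly_one, ?_⟩
  · obtain ⟨m, rfl⟩ := Nat.exists_eq_add_of_le' hn
    exact tpoly_add_two (m + 1)
  · rw [tpoly_add_two, tpoly_one, tpoly_zero]
    ring
end
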